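/- Extension Theorem. Let B be a noetherian normal integral domain containing ℚ, graded by a finitely generated abelian group G. Then: (a) for every H ∈ 𝕋(B), every derivation δ : B^{(H)} → B^{(H)} extends uniquely to a derivation D : B^{(H+𝔾̄(B))} → B^{(H+𝔾̄(B))}, and moreover if δ is locally nilpotent (respectively homogeneous) then so is D; (b) if H ∈ 𝒳(B), then H + 𝔾̄(B) ∈ 𝒳(B). -/

import Mathlib

noncomputable section

/-- A derivation is locally nilpotent. -/
def IsLND {R : Type*} [CommRing R] (D : Derivation ℤ R R) : Prop :=
  ∀ b : R, ∃ n : ℕ, 0 < n ∧ (⇑D)^[n] b = 0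

/-- Kernel of a derivation, as a subring. -/
def kerDer {R : Type*} [CommRing R] (D : Derivation ℤ R R) : Subring R where
  carrier := {x | D x = 0}
  one_mem' := by simp
  mul_mem' := by
    intro a b ha hb
    simp only [Set.mem_setOf_eq] at *
    rw [Derivation.leibniz, ha, hb]
    simp
  add_mem' := by
    intro a b ha hb
    simp only [Set.mem_setOf_eq] at *
    rw [map_add, ha, hb, add_zero]
  zero_mem' := by simp
  neg_mem' := by
    intro a ha
    simp only [Set.mem_setOf_eq] at *
    rw [map_neg, ha, neg_zero]

section Graded

variable {G : Type*} [AddCommGroup G] {B : Type*} [CommRing B]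

/-- The Veronese subring `B^{(H)} = ⊕_{i ∈ H} B_i` of a `G`-graded ring,
realized as the subring generated by the homogeneous elements whose degree lies in `H`. -/
def verSub (𝒜 : G → AddSubgroup B) (H : AddSubgroup G) : Subring B :=
  Subring.closure (⋃ i ∈ (H : Set G), (𝒜 i : Set B))

/-- 𝔾(B): the subgroup of G generated by the degrees of nonzero homogeneous elements. -/
def Gsub (𝒜 : G → AddSubgroup B) : AddSubgroup G :=
  AddSubgroup.closure { i : G | 𝒜 i ≠ ⊥ }

/-- `H ∈ 𝕋(B)`: the quotient `𝔾(B)/(H ∩ 𝔾(B))` is torsion. -/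
def Tmem (𝒜 : G → AddSubgroup B) (H : AddSubgroup G) : Prop :=
  ∀ g ∈ Gsub 𝒜, ∃ n : ℕ, 0 < n ∧ n • g ∈ H

/-- A homogeneous derivation of `B`. -/
def IsHomogDer (𝒜 : G → AddSubgroup B) (D : Derivation ℤ B B) : Prop :=
  ∃ d : G, ∀ (i : G) (x : B), x ∈ 𝒜 i → D x ∈ 𝒜 (i + d)

/-- A homogeneous derivation of a graded subring `S` of `B`. -/
def IsHomogDerOn (𝒜 : G → AddSubgroup B) (S : Subring B) (D : Derivation ℤ S S) : Prop :=
  ∃ d : G, ∀ (i : G) (x : S), (x : B) ∈ 𝒜 i → ((D x : S) : B) ∈ 𝒜 (i + d)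

/-- 𝕄̄(B,p): the subgroup of G generated by the degrees i with B_i ⊄ p. -/
def Mbar (𝒜 : G → AddSubgroup B) (p : Ideal B) : AddSubgroup G :=
  AddSubgroup.closure { i : G | ¬ (𝒜 i : Set B) ⊆ (p : Set B) }

/-- A prime ideal of height 1. -/
def heightOne {R : Type*} [CommRing R] (p : Ideal R) : Prop :=
  p.IsPrime ∧ (∃ q : Ideal R, q.IsPrime ∧ q < p) ∧
    ∀ q r : Ideal R, q.IsPrime → r.IsPrime → q < r → r < p → False

open Classical in
/-- 𝔾̄(B). -/
def Gbar (𝒜 : G → AddSubgroup B) : AddSubgroup G :=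
  if ∃ p : Ideal B, heightOne p then ⨅ p : {p : Ideal B // heightOne p}, Mbar 𝒜 p.1
  else Gsub 𝒜

end Graded

/-- `D` (a derivation of the subring `T` of `B`) extends `δ` (a derivation of the
subring `S` of `B`, with S ⊆ T). -/
def ExtendsDer {B : Type*} [CommRing B] (S T : Subring B)
    (δ : Derivation ℤ S S) (D : Derivation ℤ T T) : Prop :=
  ∀ (x : S) (y : T), (x : B) = (y : B) → ((δ x : S) : B) = ((D y : T) : B)

/-- `H ∈ 𝒳(B)`:  H ∈ 𝕋(B) and HLND(B^{(H)}) ≠ {0}. -/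
def Xmem {G : Type*} [AddCommGroup G] {B : Type*} [CommRing B]
    (𝒜 : G → AddSubgroup B) (H : AddSubgroup G) : Prop :=
  Tmem 𝒜 H ∧ ∃ D : Derivation ℤ (verSub 𝒜 H) (verSub 𝒜 H),
    IsLND D ∧ IsHomogDerOn 𝒜 (verSub 𝒜 H) D ∧ D ≠ 0

/-! Write `A = B^{(H)}` and `A' = B^{(H + 𝔾̄(B))}`. As `H ∈ 𝕋(B)`, a power of each homogeneous
element of `B` lies in `A`, so `Frac B` is algebraic over `A` and `δ` extends to a derivation `E` of
`Frac B`. Let `x ∈ A'` be homogeneous. For every height-one prime `p` there is a homogeneous `t ∉ p`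
with `x * t ∈ A`, and some power of `t` lies in `A`; since `E` maps both into `A`, the Leibniz rule
gives `E x ∈ B_p`. A noetherian normal domain is the intersection of its localizations at height-one
primes, so `E x ∈ B`. If `x ^ (k + 1) ∈ A`, then cancelling in
`(k + 1) * x ^ k * E x = δ (x ^ (k + 1))` controls the degrees of `E x`: they lie in the coset of
`deg x` modulo `H`, and `E` is homogeneous if `δ` is. The same relation determines the extension
`D` of `δ` to `A'`. Finally, every `(D^n x) ^ (k + 1)` lies in `A`, and if `δ` is locally nilpotent
then its degree with respect to `δ` strictly decreases with `n` until it vanishes. -/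

section DerivationExtension

theorem exists_derivation_extension_of_formallyEtale {k A T : Type*} [CommRing k] [CommRing A]
    [CommRing T] [Algebra k A] [Algebra k T] [Algebra A T] [IsScalarTower k A T]
    [Algebra.FormallyEtale A T] (d : Derivation k A A) :
    ∃ D : Derivation k T T, ∀ a, D (algebraMap A T a) = algebraMap A T (d a) := by
  let dT : Ω[A⁄k] →ₗ[A] T := ((Algebra.linearMap A T).compDer d).liftKaehlerDifferential
  let e := KaehlerDifferential.tensorKaehlerEquivOfFormallyEtale k A T
  refine ⟨(dT.liftBaseChange T ∘ₗ e.symm.toLinearMap).compDer (KaehlerDifferential.D k T),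
    fun a => ?_⟩
  change dT.liftBaseChange T (e.symm (KaehlerDifferential.D k T (algebraMap A T a))) = _
  rw [KaehlerDifferential.tensorKaehlerEquivOfFormallyEtale_symm_D_algebraMap]
  simp [dT]

theorem formallyEtale_of_isAlgebraic (A K : Type*) [CommRing A] [IsDomain A] [CharZero A]
    [Field K] [Algebra A K] [FaithfulSMul A K] [Algebra.IsAlgebraic A K] :
    Algebra.FormallyEtale A K := by
  let F := FractionRing A
  let := FractionRing.liftAlgebra A K
  have : IsScalarTower A F K := FractionRing.isScalarTower_liftAlgebra A K
  have : CharZero F := charZero_of_injective_algebraMap (IsFractionRing.injective A F)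
  have : Algebra.IsAlgebraic F K := (IsFractionRing.comap_isAlgebraic_iff (A := A)).1 inferInstance
  have : Algebra.FormallyEtale A F := .of_isLocalization (nonZeroDivisors A)
  have : Algebra.FormallyEtale F K := .of_isSeparable F K
  exact .comp A F K

theorem exists_derivation_restriction {k A T : Type*} [CommRing k] [CommRing A] [CommRing T]
    [Algebra k A] [Algebra k T] [Algebra A T] [IsScalarTower k A T] [FaithfulSMul A T]
    (E : Derivation k T T) (hE : ∀ a, ∃ b, algebraMap A T b = E (algebraMap A T a)) :
    ∃ D : Derivation k A A, ∀ a, algebraMap A T (D a) = E (algebraMap A T a) := by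
  choose f hf using hE
  have hinj := FaithfulSMul.algebraMap_injective A T
  refine ⟨.mk' { toFun := f, map_add' a b := hinj ?_, map_smul' c a := hinj ?_ }
    fun a b => hinj ?_, hf⟩
  · simp only [hf, map_add]
  · simp only [hf, algebraMap.coe_smul, RingHom.id_apply, Derivation.map_smul]
  · change algebraMap A T (f (a * b)) = algebraMap A T (a * f b + b * f a)
    simp only [hf, map_mul, map_add, Derivation.leibniz, smul_eq_mul]

end DerivationExtension

section HeightOne

variable {B K : Type*} [CommRing B]

theorem heightOne_of_height_le_one [IsDomain B] {p : Ideal B} [hp : p.IsPrime] (hne : p ≠ ⊥)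
    (hle : p.height ≤ 1) : heightOne p := by
  refine ⟨hp, ⟨⊥, Ideal.isPrime_bot, bot_lt_iff_ne_bot.2 hne⟩, fun q r hq hr hqr hrp => ?_⟩
  have : (2 : ℕ∞) ≤ 1 := calc
    (2 : ℕ∞) = 0 + 1 + 1 := by norm_num
    _ ≤ q.height + 1 + 1 := by gcongr; exact zero_le
    _ ≤ r.height + 1 := by gcongr; exact Ideal.height_add_one_le_of_lt_of_isPrime hqr
    _ ≤ p.height := Ideal.height_add_one_le_of_lt_of_isPrime hrp
    _ ≤ 1 := hle
  exact absurd this (by norm_num)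

variable [IsNoetherianRing B] [IsIntegrallyClosed B] [Field K] [Algebra B K] [IsFractionRing B K]

theorem exists_algebraMap_eq_of_mul_mem {p : Ideal B} (hp : p ≠ ⊥) {w : K}
    (h : ∀ t ∈ p, ∃ u ∈ p, algebraMap B K u = algebraMap B K t * w) :
    ∃ b, algebraMap B K b = w := by
  refine IsIntegrallyClosed.isIntegral_iff.1 (isIntegral_of_smul_mem_submodule
    (Submodule.map (Algebra.linearMap B K) p) ?_ (.map _ (IsNoetherian.noetherian p)) w ?_)
  · exact ((Submodule.map_injective_of_injective (IsFractionRing.injective B K)).ne_iff'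
      (Submodule.map_bot _)).2 hp
  · rintro _ ⟨t, ht, rfl⟩
    obtain ⟨u, hu, hut⟩ := h t ht
    exact ⟨u, hu, by simp [hut, mul_comm]⟩

variable [IsDomain B]

/-- If `p` is the annihilator of the class of `w ∈ K`, then `w` is not integral, so `p * w ⊄ p`;
any `t ∈ p` with `t * w ∉ p` has `p` as a minimal prime, and Krull's theorem applies. -/
theorem heightOne_of_isAssociatedPrime {p : Ideal B}
    (hp : IsAssociatedPrime p (K ⧸ LinearMap.range (Algebra.linearMap B K))) : heightOne p := by
  obtain ⟨hprime, x, hx⟩ := isAssociatedPrime_iff.1 hp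
  obtain ⟨w, rfl⟩ := Submodule.mkQ_surjective _ x
  have mem_iff (b : B) : b ∈ p ↔ ∃ c, algebraMap B K c = algebraMap B K b * w := by
    rw [hx, Submodule.mem_colon_singleton, Submodule.mem_bot, ← map_smul, Submodule.mkQ_apply,
      Submodule.Quotient.mk_eq_zero, Algebra.smul_def]
    rfl
  have hne : p ≠ ⊥ := by
    obtain ⟨a, b, hb, rfl⟩ := IsFractionRing.div_surjective (A := B) w
    have hb0 : algebraMap B K b ≠ 0 := IsFractionRing.to_map_ne_zero_of_mem_nonZeroDivisors hb
    exact p.ne_bot_iff.2 ⟨b, (mem_iff b).2 ⟨a, by field_simp⟩, nonZeroDivisors.ne_zero hb⟩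
  obtain ⟨t, ht, u, hu, hut⟩ :
      ∃ t ∈ p, ∃ u ∉ p, algebraMap B K u = algebraMap B K t * w := by
    by_contra! hcon
    obtain ⟨b, hb⟩ := exists_algebraMap_eq_of_mul_mem hne fun t ht =>
      have ⟨u, hu⟩ := (mem_iff t).1 ht
      ⟨u, by_contra fun hup => hcon t ht u hup hu, hu⟩
    exact hprime.one_notMem ((mem_iff 1).2 ⟨b, by simpa using hb⟩)
  have hmin : p ∈ (Ideal.span {t}).minimalPrimes := by
    refine ⟨⟨hprime, by simpa [Ideal.span_le] using ht⟩, fun q ⟨hq, htq⟩ hqp b hb => ?_⟩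
    obtain ⟨c, hc⟩ := (mem_iff b).1 hb
    have hbu : b * u = c * t := IsFractionRing.injective B K (by
      rw [map_mul, map_mul, hut, hc]; ring)
    have hbuq : b * u ∈ q := hbu ▸ q.mul_mem_left c (htq (Ideal.mem_span_singleton_self t))
    exact (hq.mem_or_mem hbuq).resolve_right fun huq => hu (hqp huq)
  exact heightOne_of_height_le_one hne
    (Ideal.height_le_one_of_isPrincipal_of_mem_minimalPrimes _ _ hmin)

theorem exists_algebraMap_eq_of_forall_heightOne {z : K}
    (h : ∀ p : Ideal B, heightOne p →
      ∃ s ∉ p, ∃ b, algebraMap B K b = algebraMap B K s * z) :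
    ∃ b, algebraMap B K b = z := by
  let N := LinearMap.range (Algebra.linearMap B K)
  by_contra hz
  have hmk : N.mkQ z ≠ 0 := fun h0 => hz ((Submodule.Quotient.mk_eq_zero N).1 h0)
  obtain ⟨p, hp, hle⟩ := exists_le_isAssociatedPrime_of_isNoetherianRing B (N.mkQ z) hmk
  obtain ⟨s, hsp, b, hb⟩ := h p (heightOne_of_isAssociatedPrime hp)
  refine hsp (hle ?_)
  rw [Submodule.mem_colon_singleton, Submodule.mem_bot, ← map_smul]
  exact (Submodule.Quotient.mk_eq_zero N).2 ⟨b, by simpa [Algebra.smul_def] using hb⟩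

end HeightOne

section NilpotencyDegree

open Finset.HasAntidiagonal (antidiagonal mem_antidiagonal)

variable {A R : Type*} [CommRing A] [CommRing R] [Algebra A R] {D : Derivation A R R}

theorem derivation_iterate_mul (D : Derivation A R R) (n : ℕ) (a b : R) :
    (⇑D)^[n] (a * b) = ∑ ij ∈ antidiagonal n,
      n.choose ij.1 • ((⇑D)^[ij.1] a * (⇑D)^[ij.2] b) := by
  induction n with
  | zero => simp
  | succ n ih =>
    rw [Finset.sum_antidiagonal_choose_succ_nsmul (fun i j => (⇑D)^[i] a * (⇑D)^[j] b),
      Function.iterate_succ_apply', ih, map_sum, ← Finset.sum_add_distrib]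
    refine Finset.sum_congr rfl fun ij hij => ?_
    rw [map_nsmul, Derivation.leibniz, Function.iterate_succ_apply', Function.iterate_succ_apply',
      Nat.choose_symm_of_eq_add (mem_antidiagonal.1 hij).symm, ← nsmul_add, smul_eq_mul,
      smul_eq_mul, mul_comm ((⇑D)^[ij.2] b)]

theorem derivation_iterate_eq_zero_of_le {a : R} {m n : ℕ} (h : (⇑D)^[m] a = 0) (hmn : m ≤ n) :
    (⇑D)^[n] a = 0 := by
  rw [← Nat.sub_add_cancel hmn, Function.iterate_add_apply, h, iterate_map_zero]

/-- The element `a` has degree `n` with respect to `D`: the last nonzero iterate of `D` at `a` is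
the `n`-th one. This is the degree function `deg_D` attached to a locally nilpotent derivation, as
a relation because `D` need not be nilpotent at `a` and `deg_D 0 = -∞`. -/
def HasNilpotencyDegree (D : Derivation A R R) (a : R) (n : ℕ) : Prop :=
  (⇑D)^[n] a ≠ 0 ∧ (⇑D)^[n + 1] a = 0

namespace HasNilpotencyDegree

theorem exists_of_iterate_eq_zero {a : R} (ha : a ≠ 0) {N : ℕ} (hN : (⇑D)^[N] a = 0) :
    ∃ n, HasNilpotencyDegree D a n := by
  induction N generalizing a with
  | zero => exact absurd hN ha
  | succ N ih =>
    by_cases h : (⇑D)^[N] a = 0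
    · exact ih ha h
    · exact ⟨N, h, hN⟩

theorem unique {a : R} {m n : ℕ} (hm : HasNilpotencyDegree D a m)
    (hn : HasNilpotencyDegree D a n) : m = n := by
  refine le_antisymm (not_lt.1 fun h => hm.1 ?_) (not_lt.1 fun h => hn.1 ?_)
  · exact derivation_iterate_eq_zero_of_le hn.2 h
  · exact derivation_iterate_eq_zero_of_le hm.2 h

theorem natCast [CharZero R] {n : ℕ} (hn : n ≠ 0) : HasNilpotencyDegree D (n : R) 0 :=
  ⟨by simpa using hn, by simp⟩

theorem derivation {a : R} {n : ℕ} (h : HasNilpotencyDegree D a (n + 1)) :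
    HasNilpotencyDegree D (D a) n := h

variable [IsDomain R] [CharZero R]

theorem mul {a b : R} {m n : ℕ} (ha : HasNilpotencyDegree D a m)
    (hb : HasNilpotencyDegree D b n) : HasNilpotencyDegree D (a * b) (m + n) := by
  have iterate_mul_eq_zero {i j : ℕ} (hij : m < i ∨ n < j) :
      (⇑D)^[i] a * (⇑D)^[j] b = 0 := by
    rcases hij with hi | hj
    · rw [derivation_iterate_eq_zero_of_le ha.2 hi, zero_mul]
    · rw [derivation_iterate_eq_zero_of_le hb.2 hj, mul_zero]
  constructor
  · rw [derivation_iterate_mul, Finset.sum_eq_single (m, n)]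
    · exact smul_ne_zero (Nat.choose_pos (Nat.le_add_right m n)).ne' (mul_ne_zero ha.1 hb.1)
    · rintro ⟨i, j⟩ hij hne
      rw [mem_antidiagonal] at hij
      rw [iterate_mul_eq_zero (by simp only [ne_eq, Prod.mk.injEq] at hne; omega), smul_zero]
    · simp
  · rw [derivation_iterate_mul]
    refine Finset.sum_eq_zero fun ij hij => ?_
    rw [mem_antidiagonal] at hij
    rw [iterate_mul_eq_zero (by omega), smul_zero]

theorem pow {a : R} {m : ℕ} (h : HasNilpotencyDegree D a m) (n : ℕ) :
    HasNilpotencyDegree D (a ^ n) (n * m) := by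
  induction n with
  | zero => simpa using natCast (D := D) one_ne_zero
  | succ n ih => simpa only [pow_succ, Nat.succ_mul] using ih.mul h

theorem lt_of_pow_derivation {y : R} {k d e : ℕ} (hy : HasNilpotencyDegree D (y ^ (k + 1)) d)
    (hDy : HasNilpotencyDegree D (D y ^ (k + 1)) e) : e < d := by
  have hpow : D (y ^ (k + 1)) = (k + 1 : ℕ) * y ^ k * D y := by
    simp only [Derivation.leibniz_pow, Nat.add_sub_cancel, nsmul_eq_mul, smul_eq_mul, mul_assoc]
  have hnum : HasNilpotencyDegree D (((k + 1 : ℕ) : R) ^ (k + 1)) 0 := by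
    simpa using (natCast (D := D) k.succ_ne_zero).pow (k + 1)
  have hprod := (hnum.mul (hy.pow k)).mul hDy
  have heq : ((k + 1 : ℕ) : R) ^ (k + 1) * (y ^ (k + 1)) ^ k * D y ^ (k + 1) =
      D (y ^ (k + 1)) ^ (k + 1) := by
    rw [hpow]; ring
  rw [heq] at hprod
  cases d with
  | zero =>
    refine absurd ?_ hprod.1
    have hzero : D (y ^ (k + 1)) = 0 := hy.2
    rw [hzero, zero_pow k.succ_ne_zero, iterate_map_zero]
  | succ d =>
    have hdeg : (k + 1) * d = 0 + k * (d + 1) + e := (hy.derivation.pow (k + 1)).unique hprod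
    linarith

end HasNilpotencyDegree

theorem exists_iterate_eq_zero_of_pow [IsDomain R] [CharZero R] {y : R} {k : ℕ}
    (h : ∀ n, ∃ N, (⇑D)^[N] ((⇑D)^[n] y ^ (k + 1)) = 0) : ∃ N, (⇑D)^[N] y = 0 := by
  by_cases hy : y = 0
  · exact ⟨0, hy⟩
  obtain ⟨d, hd⟩ := HasNilpotencyDegree.exists_of_iterate_eq_zero (pow_ne_zero (k + 1) hy)
    (h 0).choose_spec
  induction d using Nat.strong_induction_on generalizing y with
  | _ d ih =>
    by_cases hDy : D y = 0
    · exact ⟨1, hDy⟩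
    obtain ⟨e, he⟩ := HasNilpotencyDegree.exists_of_iterate_eq_zero (pow_ne_zero (k + 1) hDy)
      (h 1).choose_spec
    obtain ⟨N, hN⟩ := ih e (hd.lt_of_pow_derivation he) (fun n => h (n + 1)) hDy he
    exact ⟨N + 1, hN⟩

end NilpotencyDegree

section GradedSupport

open scoped Pointwise

section Basic

variable {G B : Type*} [AddCommGroup G] [CommRing B] {𝒜 : G → AddSubgroup B} {H H' : AddSubgroup G}

theorem leftAddCoset_subset {i : G} (h : H ≤ H') (hi : i ∈ H') :
    i +ᵥ (H : Set G) ⊆ (H' : Set G) := by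
  rintro _ ⟨j, hj, rfl⟩
  exact add_mem hi (h hj)

theorem nsmul_vadd_leftAddCoset {i : G} {k : ℕ} (hk : (k + 1) • i ∈ H) :
    k • i +ᵥ (i +ᵥ (H : Set G)) = H := by
  rw [vadd_vadd, ← succ_nsmul, leftAddCoset_mem_leftAddCoset H hk]

theorem mem_verSub_of_mem {i : G} (hi : i ∈ H) {x : B} (hx : x ∈ 𝒜 i) : x ∈ verSub 𝒜 H :=
  Subring.subset_closure (Set.mem_biUnion hi hx)

theorem verSub_mono (h : H ≤ H') : verSub 𝒜 H ≤ verSub 𝒜 H' :=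
  Subring.closure_mono (Set.biUnion_subset_biUnion_left h)

theorem Gbar_le_Mbar {p : Ideal B} (hp : heightOne p) : Gbar 𝒜 ≤ Mbar 𝒜 p := by
  rw [Gbar, if_pos ⟨p, hp⟩]
  exact iInf_le (fun p : {p : Ideal B // heightOne p} => Mbar 𝒜 p.1) ⟨p, hp⟩

namespace Tmem

theorem mono (hT : Tmem 𝒜 H) (h : H ≤ H') : Tmem 𝒜 H' := fun g hg =>
  have ⟨n, hn, hng⟩ := hT g hg
  ⟨n, hn, h hng⟩

theorem exists_succ_nsmul_mem (hT : Tmem 𝒜 H) {i : G} {x : B} (hx : x ∈ 𝒜 i) (h0 : x ≠ 0) :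
    ∃ k : ℕ, (k + 1) • i ∈ H := by
  have hi : i ∈ Gsub 𝒜 :=
    AddSubgroup.subset_closure (AddSubgroup.ne_bot_iff_exists_ne_zero.2 ⟨⟨x, hx⟩, by simpa⟩)
  obtain ⟨n, hn, hni⟩ := hT i hi
  exact ⟨n - 1, by rwa [Nat.sub_add_cancel hn]⟩

end Tmem

end Basic

variable {G B : Type*} [AddCommGroup G] [DecidableEq G] [CommRing B] {𝒜 : G → AddSubgroup B}
  [GradedRing 𝒜] {H H' : AddSubgroup G}

/-- The elements of `B` whose nonzero homogeneous components all have their degree in `S`. For a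
subgroup `S = H` this is `B^{(H)}`, and the cosets `S = i +ᵥ H` give the pieces of the
`G ⧸ H`-grading of `B`. -/
def supportedOn (𝒜 : G → AddSubgroup B) [GradedRing 𝒜] (S : Set G) : AddSubgroup B :=
  ⨅ j ∈ Sᶜ, (GradedRing.proj 𝒜 j).ker

theorem mem_supportedOn {S : Set G} {x : B} :
    x ∈ supportedOn 𝒜 S ↔ ∀ j ∉ S, (DirectSum.decompose 𝒜 x j : B) = 0 := by
  simp only [supportedOn, AddSubgroup.mem_iInf, Set.mem_compl_iff, AddMonoidHom.mem_ker,
    GradedRing.proj_apply]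

theorem mem_supportedOn_of_mem {S : Set G} {i : G} (hi : i ∈ S) {x : B} (hx : x ∈ 𝒜 i) :
    x ∈ supportedOn 𝒜 S :=
  mem_supportedOn.2 fun _ hj => DirectSum.decompose_of_mem_ne 𝒜 hx fun h => hj (h ▸ hi)

theorem supportedOn_le {S : Set G} {P : AddSubgroup B} (hP : ∀ i ∈ S, 𝒜 i ≤ P) :
    supportedOn 𝒜 S ≤ P := by
  classical
  intro x hx
  rw [← DirectSum.sum_support_decompose 𝒜 x]
  refine P.sum_mem fun j _ => ?_
  by_cases hj : j ∈ S
  · exact hP j hj (SetLike.coe_mem _)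
  · rw [mem_supportedOn.1 hx j hj]
    exact P.zero_mem

theorem supportedOn_mono {S T : Set G} (h : S ⊆ T) : supportedOn 𝒜 S ≤ supportedOn 𝒜 T :=
  supportedOn_le fun _ hi _ hx => mem_supportedOn_of_mem (h hi) hx

theorem supportedOn_singleton (i : G) : supportedOn 𝒜 {i} = 𝒜 i := by
  refine le_antisymm (supportedOn_le ?_) fun _ => mem_supportedOn_of_mem (Set.mem_singleton i)
  rintro _ rfl
  exact le_rfl

theorem mul_mem_supportedOn {S T : Set G} {x y : B} (hx : x ∈ supportedOn 𝒜 S)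
    (hy : y ∈ supportedOn 𝒜 T) : x * y ∈ supportedOn 𝒜 (S + T) := by
  refine supportedOn_le (P := (supportedOn 𝒜 (S + T)).comap (AddMonoidHom.mulRight y))
    (fun i hi a ha => ?_) hx
  refine supportedOn_le (P := (supportedOn 𝒜 (S + T)).comap (AddMonoidHom.mulLeft a))
    (fun j hj b hb => ?_) hy
  exact mem_supportedOn_of_mem (Set.add_mem_add hi hj) (SetLike.mul_mem_graded ha hb)

theorem pow_mem_supportedOn_coset {i : G} {x : B} (hx : x ∈ supportedOn 𝒜 (i +ᵥ (H : Set G)))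
    (n : ℕ) : x ^ n ∈ supportedOn 𝒜 (n • i +ᵥ (H : Set G)) := by
  induction n with
  | zero => simpa using mem_supportedOn_of_mem H.zero_mem (SetLike.one_mem_graded 𝒜)
  | succ n ih =>
    have hcoset : (n • i +ᵥ (H : Set G)) + (i +ᵥ (H : Set G)) = (n + 1) • i +ᵥ (H : Set G) := by
      rw [vadd_add_vadd_comm, coe_add_coe, succ_nsmul]
    simpa only [pow_succ, hcoset] using mul_mem_supportedOn ih hx

theorem mem_verSub_iff {x : B} : x ∈ verSub 𝒜 H ↔ x ∈ supportedOn 𝒜 (H : Set G) := by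
  refine ⟨fun hx => ?_, fun hx => supportedOn_le (P := (verSub 𝒜 H).toAddSubgroup)
    (fun i hi y hy => mem_verSub_of_mem hi hy) hx⟩
  induction hx using Subring.closure_induction with
  | mem x hx =>
    obtain ⟨i, hi, hxi⟩ := Set.mem_iUnion₂.1 hx
    exact mem_supportedOn_of_mem hi hxi
  | zero => exact zero_mem _
  | one => exact mem_supportedOn_of_mem H.zero_mem (SetLike.one_mem_graded 𝒜)
  | add x y _ _ hx hy => exact add_mem hx hy
  | neg x _ hx => exact neg_mem hx
  | mul x y _ _ hx hy => simpa using mul_mem_supportedOn hx hy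

theorem pow_mem_verSub {i : G} {n : ℕ} (hn : n • i ∈ H) {x : B}
    (hx : x ∈ supportedOn 𝒜 (i +ᵥ (H : Set G))) : x ^ n ∈ verSub 𝒜 H := by
  rw [mem_verSub_iff, ← leftAddCoset_mem_leftAddCoset H hn]
  exact pow_mem_supportedOn_coset hx n

theorem mem_of_mul_mem_supportedOn [IsDomain B] {S : Set G} {m : G} {f y : B} (hf : f ∈ 𝒜 m)
    (hf0 : f ≠ 0) (h : f * y ∈ supportedOn 𝒜 (m +ᵥ S)) : y ∈ supportedOn 𝒜 S := by
  refine mem_supportedOn.2 fun j hj => ?_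
  have hmj : (DirectSum.decompose 𝒜 (f * y) (m + j) : B) = 0 :=
    mem_supportedOn.1 h _ (by simpa [Set.mem_vadd_set] using hj)
  rw [DirectSum.coe_decompose_mul_add_of_left_mem 𝒜 hf] at hmj
  exact (mul_eq_zero.1 hmj).resolve_left hf0

theorem mem_of_natCast_mul_pow_mul_mem_supportedOn [IsDomain B] [CharZero B] {S : Set G} {i : G}
    {x z : B} {n k : ℕ} (hx : x ∈ 𝒜 i) (h0 : x ≠ 0) (hn : n ≠ 0)
    (h : n * x ^ k * z ∈ supportedOn 𝒜 (k • i +ᵥ S)) : z ∈ supportedOn 𝒜 S := by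
  have hmem : (n : B) * x ^ k ∈ 𝒜 (0 + k • i) :=
    SetLike.mul_mem_graded (SetLike.natCast_mem_graded 𝒜 n) (SetLike.pow_mem_graded k hx)
  refine mem_of_mul_mem_supportedOn hmem (mul_ne_zero (Nat.cast_ne_zero.2 hn) (pow_ne_zero k h0)) ?_
  rwa [zero_add]

theorem mem_of_forall_homogeneous_mem {S : Set G} (hS : S ⊆ H) {P : AddSubgroup (verSub 𝒜 H)}
    (hP : ∀ i ∈ S, ∀ x : verSub 𝒜 H, (x : B) ∈ 𝒜 i → x ∈ P) {x : verSub 𝒜 H}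
    (hx : (x : B) ∈ supportedOn 𝒜 S) : x ∈ P := by
  have hle : supportedOn 𝒜 S ≤ P.map (verSub 𝒜 H).subtype.toAddMonoidHom :=
    supportedOn_le fun i hi y hy => ⟨⟨y, mem_verSub_of_mem (hS hi) hy⟩, hP i hi _ hy, rfl⟩
  obtain ⟨y, hy, hyx⟩ := hle hx
  exact (Subtype.ext hyx : y = x) ▸ hy

theorem Tmem.isIntegral (hT : Tmem 𝒜 H) : Algebra.IsIntegral (verSub 𝒜 H) B := by
  classical
  refine ⟨fun b => ?_⟩
  rw [← DirectSum.sum_support_decompose 𝒜 b]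
  refine IsIntegral.sum _ fun j hj => ?_
  have hmem : (DirectSum.decompose 𝒜 b j : B) ∈ 𝒜 j := SetLike.coe_mem _
  obtain ⟨k, hk⟩ := hT.exists_succ_nsmul_mem hmem (by simpa using hj)
  exact .of_pow k.succ_pos (isIntegral_algebraMap (R := verSub 𝒜 H)
    (x := ⟨_, mem_verSub_of_mem hk (SetLike.pow_mem_graded _ hmem)⟩))

theorem Tmem.exists_homogeneous_notMem (hT : Tmem 𝒜 H) {p : Ideal B} [hp : p.IsPrime] {i : G}
    (hi : i ∈ H ⊔ Mbar 𝒜 p) : ∃ m, ∃ t ∈ 𝒜 m, t ∉ p ∧ i + m ∈ H := by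
  have exists_nsmul {m : G} {t : B} (ht : t ∈ 𝒜 m) (htp : t ∉ p) :
      ∃ k : ℕ, t ^ k ∈ 𝒜 (k • m) ∧ t ^ k ∉ p ∧ (k + 1) • m ∈ H := by
    obtain ⟨k, hk⟩ := hT.exists_succ_nsmul_mem ht fun h0 => htp (h0 ▸ p.zero_mem)
    exact ⟨k, SetLike.pow_mem_graded k ht, fun h => htp (hp.mem_of_pow_mem k h), hk⟩
  have one_mem_zero : (1 : B) ∈ 𝒜 0 := SetLike.one_mem_graded 𝒜
  let P : AddSubgroup G :=
    { carrier := {i | ∃ m, ∃ t ∈ 𝒜 m, t ∉ p ∧ i + m ∈ H}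
      zero_mem' := ⟨0, 1, one_mem_zero, hp.one_notMem, by simp⟩
      add_mem' := by
        rintro i j ⟨m, s, hs, hsp, him⟩ ⟨n, t, ht, htp, hjn⟩
        refine ⟨m + n, s * t, SetLike.mul_mem_graded hs ht, hp.mul_notMem hsp htp, ?_⟩
        rw [add_add_add_comm]
        exact add_mem him hjn
      neg_mem' := by
        rintro i ⟨m, t, ht, htp, him⟩
        obtain ⟨k, htk, htkp, hk⟩ := exists_nsmul ht htp
        refine ⟨k • m, t ^ k, htk, htkp, ?_⟩
        convert sub_mem hk him using 1
        rw [succ_nsmul]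
        abel }
  have hH : H ≤ P := fun i hi => ⟨0, 1, one_mem_zero, hp.one_notMem, by simpa using hi⟩
  have hM : Mbar 𝒜 p ≤ P := by
    refine (AddSubgroup.closure_le P).2 fun i hi => ?_
    obtain ⟨t, ht, htp⟩ := Set.not_subset.1 hi
    obtain ⟨k, htk, htkp, hk⟩ := exists_nsmul ht htp
    exact ⟨k • i, t ^ k, htk, htkp, by rwa [← succ_nsmul']⟩
  exact sup_le hH hM hi

end GradedSupport

namespace ExtendsDer

section Subring

variable {B : Type*} [CommRing B] {S T : Subring B} {δ : Derivation ℤ S S} {D : Derivation ℤ T T}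

theorem iterate (hD : ExtendsDer S T δ D) {x : S} {y : T} (hxy : (x : B) = y) (n : ℕ) :
    (((⇑δ)^[n] x : S) : B) = ((⇑D)^[n] y : T) := by
  induction n with
  | zero => exact hxy
  | succ n ih => simpa only [Function.iterate_succ_apply'] using hD _ _ ih

theorem natCast_mul_pow_mul_apply (hD : ExtendsDer S T δ D) {x : S} {y : T} {k : ℕ}
    (hxy : (x : B) = (y : B) ^ (k + 1)) : ((k + 1 : ℕ) : B) * (y : B) ^ k * D y = δ x := by
  rw [hD x (y ^ (k + 1)) hxy, Derivation.leibniz_pow]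
  simp [mul_assoc]

theorem ne_zero (hST : S ≤ T) (hD : ExtendsDer S T δ D) (hδ : δ ≠ 0) : D ≠ 0 := by
  rintro rfl
  exact hδ (Derivation.ext fun x => Subtype.ext (hD x ⟨x, hST x.2⟩ rfl))

end Subring

open scoped Pointwise

variable {G B : Type*} [AddCommGroup G] [DecidableEq G] [CommRing B] [IsDomain B] [CharZero B]
  {𝒜 : G → AddSubgroup B} [GradedRing 𝒜] {H H' : AddSubgroup G}
  {δ : Derivation ℤ (verSub 𝒜 H) (verSub 𝒜 H)} {D D' : Derivation ℤ (verSub 𝒜 H') (verSub 𝒜 H')}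

theorem apply_mem_supportedOn (hT : Tmem 𝒜 H) (hD : ExtendsDer (verSub 𝒜 H) (verSub 𝒜 H') δ D)
    {S : Set G} {i : G} {x : verSub 𝒜 H'} (hx : (x : B) ∈ 𝒜 i)
    (h : ∀ k : ℕ, (k + 1) • i ∈ H → ∀ a : verSub 𝒜 H, (a : B) ∈ 𝒜 ((k + 1) • i) →
      (δ a : B) ∈ supportedOn 𝒜 (k • i +ᵥ S)) :
    (D x : B) ∈ supportedOn 𝒜 S := by
  by_cases h0 : (x : B) = 0
  · rw [show x = 0 from Subtype.ext h0, map_zero]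
    exact zero_mem _
  · obtain ⟨k, hk⟩ := hT.exists_succ_nsmul_mem hx h0
    have hpow : (x : B) ^ (k + 1) ∈ 𝒜 ((k + 1) • i) := SetLike.pow_mem_graded _ hx
    refine mem_of_natCast_mul_pow_mul_mem_supportedOn (k := k) hx h0 k.succ_ne_zero ?_
    rw [hD.natCast_mul_pow_mul_apply (x := ⟨_, mem_verSub_of_mem hk hpow⟩) rfl]
    exact h k hk _ hpow

theorem isHomogDerOn (hT : Tmem 𝒜 H) (hD : ExtendsDer (verSub 𝒜 H) (verSub 𝒜 H') δ D)
    (hδ : IsHomogDerOn 𝒜 (verSub 𝒜 H) δ) : IsHomogDerOn 𝒜 (verSub 𝒜 H') D := by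
  obtain ⟨d, hd⟩ := hδ
  refine ⟨d, fun i x hx => ?_⟩
  rw [← supportedOn_singleton (𝒜 := 𝒜) (i + d)]
  refine hD.apply_mem_supportedOn hT hx fun k _ a ha => ?_
  rw [Set.vadd_set_singleton, vadd_eq_add, ← add_assoc, ← succ_nsmul, supportedOn_singleton]
  exact hd _ a ha

theorem apply_mem_supportedOn_coset (hT : Tmem 𝒜 H) (hH : H ≤ H')
    (hD : ExtendsDer (verSub 𝒜 H) (verSub 𝒜 H') δ D) {i : G} (hi : i ∈ H') {x : verSub 𝒜 H'}
    (hx : (x : B) ∈ supportedOn 𝒜 (i +ᵥ (H : Set G))) :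
    (D x : B) ∈ supportedOn 𝒜 (i +ᵥ (H : Set G)) := by
  let C := supportedOn 𝒜 (i +ᵥ (H : Set G))
  refine mem_of_forall_homogeneous_mem (leftAddCoset_subset hH hi) (P := C.comap
    ((verSub 𝒜 H').subtype.toAddMonoidHom.comp D.toLinearMap.toAddMonoidHom))
    (fun j hj y hy => ?_) hx
  refine hD.apply_mem_supportedOn hT hy fun k hk a _ => ?_
  have hcoset : i +ᵥ (H : Set G) = j +ᵥ (H : Set G) :=
    (leftAddCoset_eq_iff H).2 ((mem_leftAddCoset_iff i).1 hj)
  rw [hcoset, nsmul_vadd_leftAddCoset hk]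
  exact mem_verSub_iff.1 (δ a).2

theorem unique (hT : Tmem 𝒜 H) (hD : ExtendsDer (verSub 𝒜 H) (verSub 𝒜 H') δ D)
    (hD' : ExtendsDer (verSub 𝒜 H) (verSub 𝒜 H') δ D') : D = D' := by
  refine Derivation.ext fun x => mem_of_forall_homogeneous_mem subset_rfl
    (P := D.toLinearMap.toAddMonoidHom.eqLocus D'.toLinearMap.toAddMonoidHom)
    (fun i _ x hx => ?_) (mem_verSub_iff.1 x.2)
  change D x = D' x
  by_cases h0 : (x : B) = 0
  · rw [show x = 0 from Subtype.ext h0, map_zero, map_zero]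
  · obtain ⟨k, hk⟩ := hT.exists_succ_nsmul_mem hx h0
    let a : verSub 𝒜 H := ⟨_, mem_verSub_of_mem hk (SetLike.pow_mem_graded _ hx)⟩
    have hne : ((k + 1 : ℕ) : B) * (x : B) ^ k ≠ 0 :=
      mul_ne_zero (Nat.cast_ne_zero.2 k.succ_ne_zero) (pow_ne_zero k h0)
    refine Subtype.ext (mul_left_cancel₀ hne ?_)
    rw [hD.natCast_mul_pow_mul_apply (x := a) rfl, hD'.natCast_mul_pow_mul_apply (x := a) rfl]

theorem isLND (hT : Tmem 𝒜 H) (hH : H ≤ H') (hD : ExtendsDer (verSub 𝒜 H) (verSub 𝒜 H') δ D)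
    (hδ : IsLND δ) : IsLND D := by
  have exists_of_homogeneous (i : G) (hi : i ∈ H') (x : verSub 𝒜 H') (hx : (x : B) ∈ 𝒜 i) :
      ∃ N, (⇑D)^[N] x = 0 := by
    by_cases h0 : (x : B) = 0
    · exact ⟨0, Subtype.ext h0⟩
    obtain ⟨k, hk⟩ := hT.exists_succ_nsmul_mem hx h0
    have hcoset (n : ℕ) : (((⇑D)^[n] x : verSub 𝒜 H') : B) ∈ supportedOn 𝒜 (i +ᵥ (H : Set G)) := by
      induction n with
      | zero => exact mem_supportedOn_of_mem (mem_own_leftAddCoset H.toAddSubmonoid i) hx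
      | succ n ih =>
        rw [Function.iterate_succ_apply']
        exact hD.apply_mem_supportedOn_coset hT hH hi ih
    refine exists_iterate_eq_zero_of_pow (k := k) fun n => ?_
    let a : verSub 𝒜 H := ⟨_, pow_mem_verSub hk (hcoset n)⟩
    obtain ⟨N, -, hN⟩ := hδ a
    refine ⟨N, Subtype.ext ?_⟩
    rw [← hD.iterate (x := a) (SubmonoidClass.coe_pow _ _).symm N, hN, ZeroMemClass.coe_zero,
      ZeroMemClass.coe_zero]
  intro x
  let P := (Module.End.maxGenEigenspace D.toLinearMap 0).toAddSubgroup
  have mem_P (y : verSub 𝒜 H') : y ∈ P ↔ ∃ N, (⇑D)^[N] y = 0 := by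
    simp [P, Module.End.pow_apply]
  obtain ⟨N, hN⟩ := (mem_P x).1 (mem_of_forall_homogeneous_mem subset_rfl
    (fun i hi y hy => (mem_P y).2 (exists_of_homogeneous i hi y hy)) (mem_verSub_iff.1 x.2))
  exact ⟨N + 1, N.succ_pos, derivation_iterate_eq_zero_of_le hN N.le_succ⟩

end ExtendsDer

section Existence

open scoped Pointwise

variable {B K : Type*} [CommRing B] [Field K] [Algebra B K]

theorem exists_algebraMap_eq_natCast_mul_pow_mul_derivation {A : Subring B} {E : Derivation ℤ K K}
    (hE : ∀ a ∈ A, ∃ b, algebraMap B K b = E (algebraMap B K a)) {x t : B} {k : ℕ}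
    (hxt : x * t ∈ A) (ht : t ^ (k + 1) ∈ A) :
    ∃ b, algebraMap B K b =
      algebraMap B K ((k + 1 : ℕ) * t ^ (k + 1)) * E (algebraMap B K x) := by
  obtain ⟨u, hu⟩ := hE _ hxt
  obtain ⟨v, hv⟩ := hE _ ht
  refine ⟨(k + 1 : ℕ) * t ^ k * u - x * v, ?_⟩
  simp only [map_sub, map_mul, map_pow, map_natCast, hu, hv, Derivation.leibniz,
    Derivation.leibniz_pow, Nat.add_sub_cancel, nsmul_eq_mul, smul_eq_mul]
  ring

variable {G : Type*} [AddCommGroup G] [DecidableEq G] [IsDomain B] [IsFractionRing B K]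
  {𝒜 : G → AddSubgroup B} [GradedRing 𝒜] {H H' : AddSubgroup G}

variable (K) in
theorem Tmem.exists_derivation_extension [CharZero B] (hT : Tmem 𝒜 H)
    (δ : Derivation ℤ (verSub 𝒜 H) (verSub 𝒜 H)) :
    ∃ E : Derivation ℤ K K, ∀ a : verSub 𝒜 H, E (algebraMap B K a) = algebraMap B K (δ a) := by
  have : FaithfulSMul (verSub 𝒜 H) K := (faithfulSMul_iff_algebraMap_injective _ K).2
    ((IsFractionRing.injective B K).comp Subtype.val_injective)
  have := hT.isIntegral
  have : Algebra.IsAlgebraic (verSub 𝒜 H) K :=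
    (IsFractionRing.isAlgebraic_iff' (verSub 𝒜 H) B K).1 inferInstance
  have := formallyEtale_of_isAlgebraic (verSub 𝒜 H) K
  exact exists_derivation_extension_of_formallyEtale δ

theorem mem_supportedOn_coset_of_algebraMap_eq [CharZero B] (hT : Tmem 𝒜 H) {E : Derivation ℤ K K}
    (hE : ∀ a ∈ verSub 𝒜 H, ∃ b ∈ verSub 𝒜 H, algebraMap B K b = E (algebraMap B K a))
    {i : G} {x z : B} (hx : x ∈ 𝒜 i) (hz : algebraMap B K z = E (algebraMap B K x)) :
    z ∈ supportedOn 𝒜 (i +ᵥ (H : Set G)) := by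
  have hinj := IsFractionRing.injective B K
  by_cases h0 : x = 0
  · rw [show z = 0 from hinj (by simp [hz, h0])]
    exact zero_mem _
  obtain ⟨k, hk⟩ := hT.exists_succ_nsmul_mem hx h0
  obtain ⟨b, hb, hbE⟩ := hE _ (mem_verSub_of_mem hk (SetLike.pow_mem_graded _ hx))
  have hbz : ((k + 1 : ℕ) : B) * x ^ k * z = b := hinj (by
    simp only [map_mul, map_pow, map_natCast, hz, hbE, Derivation.leibniz_pow, Nat.add_sub_cancel,
      nsmul_eq_mul, smul_eq_mul, mul_assoc])
  refine mem_of_natCast_mul_pow_mul_mem_supportedOn (k := k) hx h0 k.succ_ne_zero ?_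
  rw [hbz, nsmul_vadd_leftAddCoset hk]
  exact mem_verSub_iff.1 hb

variable [IsNoetherianRing B] [IsIntegrallyClosed B] [Algebra ℚ B]

theorem exists_algebraMap_eq_derivation (hT : Tmem 𝒜 H) {E : Derivation ℤ K K}
    (hE : ∀ a ∈ verSub 𝒜 H, ∃ b, algebraMap B K b = E (algebraMap B K a))
    {i : G} (hi : ∀ p : Ideal B, heightOne p → i ∈ H ⊔ Mbar 𝒜 p) {x : B} (hx : x ∈ 𝒜 i) :
    ∃ z, algebraMap B K z = E (algebraMap B K x) := by
  refine exists_algebraMap_eq_of_forall_heightOne fun p hp => ?_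
  have : p.IsPrime := hp.1
  obtain ⟨m, t, ht, htp, him⟩ := hT.exists_homogeneous_notMem (hi p hp)
  obtain ⟨k, hk⟩ := hT.exists_succ_nsmul_mem ht fun h0 => htp (h0 ▸ p.zero_mem)
  have hunit : IsUnit ((k + 1 : ℕ) : B) := by
    simpa using (Nat.cast_ne_zero (R := ℚ).2 k.succ_ne_zero).isUnit.map (algebraMap ℚ B)
  refine ⟨(k + 1 : ℕ) * t ^ (k + 1), fun hmem => htp ?_,
    exists_algebraMap_eq_natCast_mul_pow_mul_derivation hE
      (mem_verSub_of_mem him (SetLike.mul_mem_graded hx ht))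
      (mem_verSub_of_mem hk (SetLike.pow_mem_graded _ ht))⟩
  exact this.mem_of_pow_mem _ ((p.unit_mul_mem_iff_mem hunit).1 hmem)

theorem Tmem.exists_extendsDer (hT : Tmem 𝒜 H) (hH : H ≤ H')
    (hH' : ∀ p : Ideal B, heightOne p → H' ≤ H ⊔ Mbar 𝒜 p)
    (δ : Derivation ℤ (verSub 𝒜 H) (verSub 𝒜 H)) :
    ∃ D : Derivation ℤ (verSub 𝒜 H') (verSub 𝒜 H'),
      ExtendsDer (verSub 𝒜 H) (verSub 𝒜 H') δ D := by
  -- `FractionRing B` carries two `ℤ`-algebra structures; an abstract `K` has only one.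
  obtain ⟨K, _, _, _⟩ : ∃ (K : Type _) (_ : Field K) (_ : Algebra B K), IsFractionRing B K :=
    ⟨FractionRing B, inferInstance, inferInstance, inferInstance⟩
  have : CharZero B := algebraRat.charZero B
  have hinj := IsFractionRing.injective B K
  have : FaithfulSMul (verSub 𝒜 H') K :=
    (faithfulSMul_iff_algebraMap_injective _ K).2 (hinj.comp Subtype.val_injective)
  obtain ⟨E, hEδ⟩ := hT.exists_derivation_extension K δ
  have hE : ∀ a ∈ verSub 𝒜 H, ∃ b ∈ verSub 𝒜 H, algebraMap B K b = E (algebraMap B K a) :=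
    fun a ha => ⟨δ ⟨a, ha⟩, SetLike.coe_mem _, (hEδ ⟨a, ha⟩).symm⟩
  have stable (x : verSub 𝒜 H') : ∃ z : verSub 𝒜 H', algebraMap B K z = E (algebraMap B K x) := by
    let ι := (algebraMap (verSub 𝒜 H') K).toAddMonoidHom
    refine mem_of_forall_homogeneous_mem subset_rfl
      (P := ι.range.comap ((E : K →+ K).comp ι)) (fun i hi x hx => ?_) (mem_verSub_iff.1 x.2)
    obtain ⟨z, hz⟩ := exists_algebraMap_eq_derivation hT
      (fun a ha => (hE a ha).imp fun _ => And.right) (fun p hp => hH' p hp hi) hx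
    have hzH : z ∈ supportedOn 𝒜 (i +ᵥ (H : Set G)) :=
      mem_supportedOn_coset_of_algebraMap_eq hT hE hx hz
    have hzH' : z ∈ supportedOn 𝒜 (H' : Set G) := supportedOn_mono (leftAddCoset_subset hH hi) hzH
    exact ⟨⟨z, mem_verSub_iff.2 hzH'⟩, hz⟩
  obtain ⟨D, hD⟩ := exists_derivation_restriction E stable
  refine ⟨D, fun x y hxy => hinj ?_⟩
  calc algebraMap B K (δ x) = E (algebraMap B K x) := (hEδ x).symm
    _ = E (algebraMap B K y) := by rw [hxy]
    _ = algebraMap B K (D y) := (hD y).symm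

end Existence

theorem extension_theorem_general
    {G : Type*} [AddCommGroup G] [DecidableEq G]
    {B : Type*} [CommRing B] [IsDomain B] [IsNoetherianRing B] [IsIntegrallyClosed B]
    [Algebra ℚ B]
    (𝒜 : G → AddSubgroup B) [GradedRing 𝒜] :
    (∀ H : AddSubgroup G, Tmem 𝒜 H →
      ∀ δ : Derivation ℤ (verSub 𝒜 H) (verSub 𝒜 H),
        (∃! D : Derivation ℤ (verSub 𝒜 (H ⊔ Gbar 𝒜)) (verSub 𝒜 (H ⊔ Gbar 𝒜)),
          ExtendsDer (verSub 𝒜 H) (verSub 𝒜 (H ⊔ Gbar 𝒜)) δ D) ∧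
        (∀ D : Derivation ℤ (verSub 𝒜 (H ⊔ Gbar 𝒜)) (verSub 𝒜 (H ⊔ Gbar 𝒜)),
          ExtendsDer (verSub 𝒜 H) (verSub 𝒜 (H ⊔ Gbar 𝒜)) δ D →
            (IsLND δ → IsLND D) ∧
            (IsHomogDerOn 𝒜 (verSub 𝒜 H) δ →
              IsHomogDerOn 𝒜 (verSub 𝒜 (H ⊔ Gbar 𝒜)) D))) ∧
    (∀ H : AddSubgroup G, Xmem 𝒜 H → Xmem 𝒜 (H ⊔ Gbar 𝒜)) := by
  have : CharZero B := algebraRat.charZero B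
  have exists_extendsDer {H : AddSubgroup G} (hT : Tmem 𝒜 H) :=
    hT.exists_extendsDer (le_sup_left : H ≤ H ⊔ Gbar 𝒜)
      fun p hp => sup_le_sup_left (Gbar_le_Mbar hp) H
  refine ⟨fun H hT δ => ⟨?_, fun D hD => ⟨hD.isLND hT le_sup_left, hD.isHomogDerOn hT⟩⟩, ?_⟩
  · obtain ⟨D, hD⟩ := exists_extendsDer hT δ
    exact ⟨D, hD, fun D' hD' => hD'.unique hT hD⟩
  · rintro H ⟨hT, δ, hδ, hδhom, hδ0⟩
    obtain ⟨D, hD⟩ := exists_extendsDer hT δ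
    exact ⟨hT.mono le_sup_left, D, hD.isLND hT le_sup_left hδ, hD.isHomogDerOn hT hδhom,
      hD.ne_zero (verSub_mono le_sup_left) hδ0⟩

/-- **Extension Theorem.** Let B be a noetherian normal ℚ-domain graded by a finitely
generated abelian group G.  Then:
(a) if H ∈ 𝕋(B), every derivation δ of B^{(H)} extends uniquely to a derivation D of
    B^{(H + 𝔾̄(B))}; moreover if δ is locally nilpotent (resp. homogeneous) then so is
    any such extension D;
(b) if H ∈ 𝒳(B) then H + 𝔾̄(B) ∈ 𝒳(B). -/
theorem extension_theorem
    {G : Type*} [AddCommGroup G] [DecidableEq G] [AddGroup.FG G]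
    {B : Type*} [CommRing B] [IsDomain B] [IsNoetherianRing B] [IsIntegrallyClosed B]
    [Algebra ℚ B]
    (𝒜 : G → AddSubgroup B) [GradedRing 𝒜] :
    (∀ H : AddSubgroup G, Tmem 𝒜 H →
      ∀ δ : Derivation ℤ (verSub 𝒜 H) (verSub 𝒜 H),
        (∃! D : Derivation ℤ (verSub 𝒜 (H ⊔ Gbar 𝒜)) (verSub 𝒜 (H ⊔ Gbar 𝒜)),
          ExtendsDer (verSub 𝒜 H) (verSub 𝒜 (H ⊔ Gbar 𝒜)) δ D) ∧
        (∀ D : Derivation ℤ (verSub 𝒜 (H ⊔ Gbar 𝒜)) (verSub 𝒜 (H ⊔ Gbar 𝒜)),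
          ExtendsDer (verSub 𝒜 H) (verSub 𝒜 (H ⊔ Gbar 𝒜)) δ D →
            (IsLND δ → IsLND D) ∧
            (IsHomogDerOn 𝒜 (verSub 𝒜 H) δ →
              IsHomogDerOn 𝒜 (verSub 𝒜 (H ⊔ Gbar 𝒜)) D))) ∧
    (∀ H : AddSubgroup G, Xmem 𝒜 H → Xmem 𝒜 (H ⊔ Gbar 𝒜)) :=
  extension_theorem_general 𝒜
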